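/- arXiv:1812.06793 — 2 statements merged into one kernel-verified Lean document; each statement's English description precedes it below -/
import Mathlib

section
/- Let φ(λ) = bλ + ∫_{(0,∞)} (1 − e^{−λs}) ν(ds) be the Laplace exponent of a subordinator with Lévy measure ν. Suppose there are x₀ ≥ 0, C ≥ 1 and α > 0 such that ν((r,∞)) ≤ C·λ^α·ν((λr,∞)) for all 0 < r < 1/x₀ (all r > 0 if x₀ = 0) and all 0 < λ ≤ 1. Then −φ'' ∈ WLSC(α−2, c, x₀) for some c ∈ (0,1]. -/
open MeasureTheory Real Set

noncomputable section

/-- Weak lower scaling property at infinity. -/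
def WLSC (f : ℝ → ℝ) (θ c x₀ : ℝ) : Prop :=
  ∀ lam : ℝ, 1 ≤ lam → ∀ x : ℝ, x₀ < x → c * lam ^ θ * f x ≤ f (lam * x)

/-!
Up to sign, the `n`-th derivative of `φ` for `n ≥ 2` is the Laplace moment `∫ sⁿ e^{-xs} ν(ds)`.
Since `tⁿ e^{-t} ≤ n! (1 ∧ t)ⁿ` for `t ≥ 0`, its multiple by `xⁿ` is at most `n!` times the
truncated moment `∫ (1 ∧ xs)ⁿ ν(ds)`, and the latter inherits the tail scaling by the layer cake
formula, the level sets of `s ↦ 1 ∧ xs` being the half-lines `(t/x, ∞)` with `t < 1`.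
Conversely `(1 ∧ xs)ⁿ ≤ e (xs)ⁿ e^{-xs}` for `s ≤ 1/x`, so only the mass of `(1/x, ∞)` has to be
controlled; choosing `ρ` with `C ρ^α ≤ 1/2`, the tail condition bounds it by the mass of
`(ρ/x, 1/x]`, on which `(xs)ⁿ e^{-xs} ≥ ρⁿ / e`.
-/

open Filter Topology ENNReal

lemma pow_mul_exp_neg_le_factorial_mul_min (n : ℕ) {t : ℝ} (ht : 0 ≤ t) :
    t ^ n * exp (-t) ≤ n.factorial * min 1 t ^ n := by
  rcases le_total 1 t with h | h
  · rw [min_eq_left h, one_pow, mul_one, exp_neg, ← div_eq_mul_inv, div_le_comm₀ (exp_pos t)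
      (by positivity)]
    exact pow_div_factorial_le_exp t ht n
  · rw [min_eq_right h, mul_comm]
    gcongr
    exact (exp_le_one_iff.2 (neg_nonpos.2 ht)).trans (mod_cast n.factorial_pos)

lemma one_sub_exp_neg_le_min (t : ℝ) : 1 - exp (-t) ≤ min 1 t :=
  le_min (by linarith [exp_pos (-t)]) (by linarith [one_sub_le_exp_neg t])

lemma one_le_exp_one_mul_exp_neg {t : ℝ} (ht : t ≤ 1) : 1 ≤ exp 1 * exp (-t) := by
  rw [← exp_add, one_le_exp_iff]
  linarith

lemma exists_mul_rpow_le {α ε : ℝ} (hα : 0 < α) (hε : 0 < ε) (C : ℝ) :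
    ∃ ρ, 0 < ρ ∧ ρ ≤ 1 ∧ C * ρ ^ α ≤ ε := by
  have hlim : Tendsto (fun ρ : ℝ => C * ρ ^ α) (𝓝[>] 0) (𝓝 0) := by
    have hcont : Continuous fun ρ : ℝ => C * ρ ^ α := (continuous_rpow_const hα.le).const_mul C
    simpa only [zero_rpow hα.ne', mul_zero] using (hcont.tendsto 0).mono_left nhdsWithin_le_nhds
  obtain ⟨ρ, hCρ, hρ, hρ₁⟩ :=
    ((hlim.eventually_le_const hε).and (Ioc_mem_nhdsGT one_pos)).exists
  exact ⟨ρ, hρ, hρ₁, hCρ⟩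

/-! ### Laplace moments and the derivatives of the Laplace exponent -/

/-- The Laplace moment `∫_{(0,∞)} sⁿ e^{-xs} ν(ds)`, up to sign the `n`-th derivative of the
Laplace transform of `ν`. -/
def laplaceMoment (ν : Measure ℝ) (n : ℕ) (x : ℝ) : ℝ :=
  ∫ s in Ioi (0 : ℝ), s ^ n * exp (-x * s) ∂ν

section Derivatives

variable {ν : Measure ℝ} {n : ℕ} {x : ℝ}

lemma laplaceMoment_nonneg : 0 ≤ laplaceMoment ν n x :=
  setIntegral_nonneg measurableSet_Ioi fun s hs => by
    have : 0 < s := hs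
    positivity

lemma integrableOn_min_one (hν : ∫⁻ s in Ioi (0 : ℝ), ENNReal.ofReal (min 1 s) ∂ν ≠ ⊤) :
    IntegrableOn (fun s => min 1 s) (Ioi 0) ν := by
  refine ⟨by fun_prop, ?_⟩
  rw [hasFiniteIntegral_iff_ofReal]
  · exact hν.lt_top
  · filter_upwards [ae_restrict_mem measurableSet_Ioi] with s hs
    exact le_min zero_le_one (le_of_lt hs)

variable (hν : IntegrableOn (fun s => min 1 s) (Ioi 0) ν)
include hν

lemma integrableOn_min_one_mul (hx : 0 ≤ x) :
    IntegrableOn (fun s => min 1 (x * s)) (Ioi 0) ν := by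
  refine (hν.const_mul (max 1 x)).mono' (by fun_prop) ?_
  filter_upwards [ae_restrict_mem measurableSet_Ioi] with s (hs : 0 < s)
  rw [norm_of_nonneg (by positivity), mul_min_of_nonneg _ _ (by positivity), mul_one]
  gcongr <;> simp

lemma integrableOn_one_sub_exp_neg (hx : 0 ≤ x) :
    IntegrableOn (fun s => 1 - exp (-x * s)) (Ioi 0) ν := by
  refine (integrableOn_min_one_mul hν hx).mono' (by fun_prop) ?_
  filter_upwards [ae_restrict_mem measurableSet_Ioi] with s (hs : 0 < s)
  rw [neg_mul, norm_of_nonneg (sub_nonneg.2 <| exp_le_one_iff.2 <| neg_nonpos.2 <| by positivity)]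
  exact one_sub_exp_neg_le_min _

lemma integrableOn_pow_mul_exp_neg (hn : n ≠ 0) (hx : 0 < x) :
    IntegrableOn (fun s => s ^ n * exp (-x * s)) (Ioi 0) ν := by
  refine ((integrableOn_min_one_mul hν hx.le).const_mul (n.factorial / x ^ n)).mono'
    (by fun_prop) ?_
  filter_upwards [ae_restrict_mem measurableSet_Ioi] with s (hs : 0 < s)
  rw [norm_of_nonneg (by positivity), div_mul_eq_mul_div, le_div_iff₀ (by positivity)]
  calc s ^ n * exp (-x * s) * x ^ n
      = (x * s) ^ n * exp (-(x * s)) := by rw [neg_mul]; ring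
    _ ≤ n.factorial * min 1 (x * s) ^ n :=
        pow_mul_exp_neg_le_factorial_mul_min n (by positivity)
    _ ≤ n.factorial * min 1 (x * s) := by
        gcongr
        exact pow_le_of_le_one (by positivity) (min_le_left _ _) hn

lemma hasDerivAt_setIntegral_of_hasDerivAt_pow_mul_exp {F : ℝ → ℝ → ℝ} {c : ℝ} (hn : n ≠ 0)
    (hF : ∀ y, 0 < y → IntegrableOn (F y) (Ioi 0) ν)
    (hF' : ∀ s y, HasDerivAt (F · s) (c * (s ^ n * exp (-y * s))) y) (hx : 0 < x) :
    HasDerivAt (fun y => ∫ s in Ioi (0 : ℝ), F y s ∂ν) (c * laplaceMoment ν n x) x := by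
  have hx2 : 0 < x / 2 := half_pos hx
  rw [laplaceMoment, ← integral_const_mul]
  refine (hasDerivAt_integral_of_dominated_loc_of_deriv_le
    (bound := fun s => ‖c‖ * (s ^ n * exp (-(x / 2) * s))) (Ioi_mem_nhds (half_lt_self hx))
    ?_ (hF x hx) (by fun_prop) ?_ ((integrableOn_pow_mul_exp_neg hν hn hx2).const_mul _)
    (Eventually.of_forall fun s y _ => hF' s y)).2
  · filter_upwards [Ioi_mem_nhds hx] with y hy
    exact (hF y hy).aestronglyMeasurable
  · filter_upwards [ae_restrict_mem measurableSet_Ioi] with s (hs : 0 < s) y (hy : x / 2 < y)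
    rw [norm_mul, norm_of_nonneg (by positivity : 0 ≤ s ^ n * exp (-y * s))]
    gcongr

lemma hasDerivAt_integral_one_sub_exp_neg (hx : 0 < x) :
    HasDerivAt (fun y => ∫ s in Ioi (0 : ℝ), (1 - exp (-y * s)) ∂ν) (laplaceMoment ν 1 x) x := by
  rw [← one_mul (laplaceMoment ν 1 x)]
  refine hasDerivAt_setIntegral_of_hasDerivAt_pow_mul_exp hν one_ne_zero
    (fun y hy => integrableOn_one_sub_exp_neg hν hy.le) (fun s y => ?_) hx
  exact (((hasDerivAt_neg y).mul_const s).exp.const_sub 1).congr_deriv (by ring)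

lemma hasDerivAt_laplaceMoment (hn : n ≠ 0) (hx : 0 < x) :
    HasDerivAt (laplaceMoment ν n) (-laplaceMoment ν (n + 1) x) x := by
  rw [← neg_one_mul]
  refine hasDerivAt_setIntegral_of_hasDerivAt_pow_mul_exp hν n.succ_ne_zero
    (fun y hy => integrableOn_pow_mul_exp_neg hν hn hy) (fun s y => ?_) hx
  exact (((hasDerivAt_neg y).mul_const s).exp.const_mul (s ^ n)).congr_deriv (by ring)

lemma hasDerivAt_iteratedDeriv_laplaceExponent {φ : ℝ → ℝ} {a b : ℝ}
    (hφ : ∀ y, 0 < y → φ y = a + b * y + ∫ s in Ioi (0 : ℝ), (1 - exp (-y * s)) ∂ν) (n : ℕ)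
    (hx : 0 < x) :
    HasDerivAt (iteratedDeriv (n + 1) φ) ((-1) ^ (n + 1) * laplaceMoment ν (n + 2) x) x := by
  induction n generalizing x with
  | zero =>
    have hderiv : ∀ y, 0 < y → deriv φ y = b + laplaceMoment ν 1 y := fun y hy => by
      have hlin : HasDerivAt (fun z => a + b * z) b y := by
        simpa using ((hasDerivAt_id y).const_mul b).const_add a
      refine ((hlin.add (hasDerivAt_integral_one_sub_exp_neg hν hy)).congr_of_eventuallyEq ?_).deriv
      filter_upwards [Ioi_mem_nhds hy] with z hz using hφ z hz
    rw [zero_add, iteratedDeriv_one, pow_one, neg_one_mul]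
    refine ((hasDerivAt_laplaceMoment hν one_ne_zero hx).const_add b).congr_of_eventuallyEq ?_
    filter_upwards [Ioi_mem_nhds hx] with y hy using hderiv y hy
  | succ n ih =>
    refine (((hasDerivAt_laplaceMoment hν (n + 1).succ_ne_zero hx).const_mul
      ((-1) ^ (n + 1))).congr_of_eventuallyEq ?_).congr_deriv (by ring)
    filter_upwards [Ioi_mem_nhds hx] with y hy
    rw [iteratedDeriv_succ, (ih hy).deriv]

end Derivatives

/-! ### Moments at scale `1/x` -/

/-- The truncated moment `∫_{(0,∞)} (1 ∧ xs)ⁿ ν(ds)`, an extended nonnegative real. -/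
def truncatedMoment (ν : Measure ℝ) (n : ℕ) (x : ℝ) : ℝ≥0∞ :=
  ∫⁻ s in Ioi (0 : ℝ), ENNReal.ofReal (min 1 (x * s) ^ n) ∂ν

/-- The scale-invariant form `∫_{(0,∞)} (xs)ⁿ e^{-xs} ν(ds)` of `laplaceMoment`, as an extended
nonnegative real so that it can be compared with `truncatedMoment` without integrability side
conditions. -/
def scaledLaplaceMoment (ν : Measure ℝ) (n : ℕ) (x : ℝ) : ℝ≥0∞ :=
  ∫⁻ s in Ioi (0 : ℝ), ENNReal.ofReal ((x * s) ^ n * exp (-(x * s))) ∂ν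

section Moments

variable {ν : Measure ℝ} {n : ℕ} {x : ℝ}

lemma scaledLaplaceMoment_eq_ofReal (hν : IntegrableOn (fun s => min 1 s) (Ioi 0) ν)
    (hn : n ≠ 0) (hx : 0 < x) :
    scaledLaplaceMoment ν n x = ENNReal.ofReal (x ^ n * laplaceMoment ν n x) := by
  rw [laplaceMoment, ← integral_const_mul, ofReal_integral_eq_lintegral_ofReal
    ((integrableOn_pow_mul_exp_neg hν hn hx).const_mul _)]
  · simp only [scaledLaplaceMoment, mul_pow, mul_assoc, neg_mul]
  · filter_upwards [ae_restrict_mem measurableSet_Ioi] with s (hs : 0 < s)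
    positivity

lemma scaledLaplaceMoment_le_truncatedMoment (hx : 0 ≤ x) :
    scaledLaplaceMoment ν n x ≤ ENNReal.ofReal n.factorial * truncatedMoment ν n x := by
  rw [truncatedMoment, ← lintegral_const_mul' _ _ ofReal_ne_top]
  refine setLIntegral_mono' measurableSet_Ioi fun s (hs : 0 < s) => ?_
  rw [← ofReal_mul (by positivity)]
  exact ofReal_le_ofReal (pow_mul_exp_neg_le_factorial_mul_min n (by positivity))

lemma truncatedMoment_le_add_measure_Ioi (hx : 0 < x) :
    truncatedMoment ν n x ≤
      ENNReal.ofReal (exp 1) * scaledLaplaceMoment ν n x + ν (Ioi (1 / x)) := by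
  have hsub : Ioi (1 / x) ⊆ Ioi 0 := Ioi_subset_Ioi (by positivity)
  rw [← Measure.restrict_eq_self ν hsub, ← lintegral_indicator_one measurableSet_Ioi,
    scaledLaplaceMoment, ← lintegral_const_mul' _ _ ofReal_ne_top,
    ← lintegral_add_right _ (measurable_one.indicator measurableSet_Ioi)]
  refine setLIntegral_mono' measurableSet_Ioi fun s (hs : 0 < s) => ?_
  rcases le_or_gt s (1 / x) with h | h
  · refine le_add_right ?_
    rw [← ofReal_mul (by positivity)]
    refine ofReal_le_ofReal ?_
    have hxs : x * s ≤ 1 := by rwa [le_div_iff₀' hx] at h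
    calc min 1 (x * s) ^ n ≤ (x * s) ^ n := by gcongr; exact min_le_right _ _
      _ ≤ (x * s) ^ n * (exp 1 * exp (-(x * s))) :=
          le_mul_of_one_le_right (by positivity) (one_le_exp_one_mul_exp_neg hxs)
      _ = exp 1 * ((x * s) ^ n * exp (-(x * s))) := by ring
  · refine le_add_left ?_
    rw [indicator_of_mem (mem_Ioi.2 h), Pi.one_apply, ofReal_le_one]
    exact pow_le_one₀ (by positivity) (min_le_left _ _)

lemma measure_Ioc_le_scaledLaplaceMoment {ρ : ℝ} (hρ : 0 < ρ) (hx : 0 < x) :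
    ν (Ioc (ρ / x) (1 / x)) ≤
      ENNReal.ofReal (exp 1 * (ρ ^ n)⁻¹) * scaledLaplaceMoment ν n x := by
  have hsub : Ioc (ρ / x) (1 / x) ⊆ Ioi 0 := fun s hs => lt_trans (by positivity) hs.1
  rw [scaledLaplaceMoment, ← lintegral_const_mul' _ _ ofReal_ne_top, ← setLIntegral_one]
  refine le_trans (setLIntegral_mono' measurableSet_Ioc fun s hs => ?_) (lintegral_mono_set hsub)
  have hρs : ρ ≤ x * s := ((div_lt_iff₀' hx).1 hs.1).le
  have hxs : x * s ≤ 1 := (le_div_iff₀' hx).1 hs.2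
  have hpow : 1 ≤ (ρ ^ n)⁻¹ * (x * s) ^ n := by
    rw [inv_mul_eq_div, one_le_div (by positivity)]
    gcongr
  rw [← ofReal_mul (by positivity), one_le_ofReal]
  calc 1 ≤ (ρ ^ n)⁻¹ * (x * s) ^ n * (exp 1 * exp (-(x * s))) :=
        one_le_mul_of_one_le_of_one_le hpow (one_le_exp_one_mul_exp_neg hxs)
    _ = exp 1 * (ρ ^ n)⁻¹ * ((x * s) ^ n * exp (-(x * s))) := by ring

lemma truncatedMoment_eq_lintegral_measure_lt (hn : n ≠ 0) (hx : 0 ≤ x) :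
    truncatedMoment ν n x = ENNReal.ofReal n * ∫⁻ t in Ioi (0 : ℝ),
      ν.restrict (Ioi 0) {s | t < min 1 (x * s)} * ENNReal.ofReal (t ^ ((n : ℝ) - 1)) := by
  rw [← lintegral_rpow_eq_lintegral_meas_lt_mul _ _ (by fun_prop)
    (mod_cast Nat.pos_of_ne_zero hn)]
  · simp only [truncatedMoment, Real.rpow_natCast]
  · filter_upwards [ae_restrict_mem measurableSet_Ioi] with s (hs : 0 < s)
    exact le_min zero_le_one (by positivity)

lemma restrict_Ioi_setOf_lt_min_one_mul {t : ℝ} (ht : 0 ≤ t) (ht₁ : t < 1) (hx : 0 < x) :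
    ν.restrict (Ioi 0) {s | t < min 1 (x * s)} = ν (Ioi (t / x)) := by
  have hset : {s | t < min 1 (x * s)} = Ioi (t / x) := by
    ext s
    simp only [mem_ofPred_eq, lt_min_iff, ht₁, true_and, mem_Ioi, div_lt_iff₀' hx]
  rw [hset, Measure.restrict_eq_self ν (Ioi_subset_Ioi (by positivity))]

lemma measure_Ioi_ne_top (hν : IntegrableOn (fun s => min 1 s) (Ioi 0) ν) {r : ℝ} (hr : 0 < r) :
    ν (Ioi r) ≠ ⊤ := by
  rw [← Measure.restrict_eq_self ν (Ioi_subset_Ioi hr.le)]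
  refine ne_top_of_le_ne_top (hν.measure_ge_lt_top (lt_min one_pos hr)).ne (measure_mono ?_)
  exact fun s (hs : r < s) => min_le_min_left 1 hs.le

end Moments

/-! ### Tail scaling -/

/-- The tail `r ↦ ν((r,∞))` satisfies `ν((r,∞)) ≤ C λ^α ν((λr,∞))` for `λ ∈ (0,1]` and
`0 < r < 1/x₀`. The last bound is written as `r * x₀ < 1` so that it is void for `x₀ = 0`. -/
def TailScaling (ν : Measure ℝ) (α C x₀ : ℝ) : Prop :=
  ∀ r : ℝ, 0 < r → r * x₀ < 1 → ∀ lam : ℝ, 0 < lam → lam ≤ 1 →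
    ν (Ioi r) ≤ ENNReal.ofReal (C * lam ^ α) * ν (Ioi (lam * r))

namespace TailScaling

variable {ν : Measure ℝ} {α C x₀ x lam : ℝ} {n : ℕ}

lemma truncatedMoment_le (h : TailScaling ν α C x₀) (hn : n ≠ 0) (hx₀ : 0 ≤ x₀) (hx : x₀ < x)
    (hlam : 1 ≤ lam) :
    truncatedMoment ν n x ≤
      ENNReal.ofReal (C * lam⁻¹ ^ α) * truncatedMoment ν n (lam * x) := by
  have hx' : 0 < x := hx₀.trans_lt hx
  rw [truncatedMoment_eq_lintegral_measure_lt hn hx'.le,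
    truncatedMoment_eq_lintegral_measure_lt hn (by positivity), mul_left_comm]
  gcongr
  rw [← lintegral_const_mul' _ _ ofReal_ne_top]
  refine setLIntegral_mono' measurableSet_Ioi fun t (ht : 0 < t) => ?_
  rw [← mul_assoc]
  gcongr
  rcases lt_or_ge t 1 with ht₁ | ht₁
  · rw [restrict_Ioi_setOf_lt_min_one_mul ht.le ht₁ hx',
      restrict_Ioi_setOf_lt_min_one_mul ht.le ht₁ (by positivity),
      show t / (lam * x) = lam⁻¹ * (t / x) by field_simp]
    refine h (t / x) (by positivity) ?_ lam⁻¹ (by positivity) (inv_le_one_of_one_le₀ hlam)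
    rw [div_mul_eq_mul_div, div_lt_one hx']
    nlinarith
  · have hempty : {s | t < min 1 (x * s)} = ∅ :=
      eq_empty_of_forall_notMem fun s hs => (hs.trans_le (min_le_left _ _)).not_ge ht₁
    simp only [hempty, measure_empty, zero_le]

lemma measure_Ioi_le_measure_Ioc (h : TailScaling ν α C x₀) {r ρ : ℝ} (hr : 0 < r)
    (hrx₀ : r * x₀ < 1) (hfin : ν (Ioi r) ≠ ⊤) (hρ : 0 < ρ) (hρ₁ : ρ ≤ 1)
    (hCρ : C * ρ ^ α ≤ 1 / 2) :
    ν (Ioi r) ≤ ν (Ioc (ρ * r) r) := by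
  have hunion : ν (Ioi (ρ * r)) = ν (Ioc (ρ * r) r) + ν (Ioi r) := by
    rw [← measure_union (Ioc_disjoint_Ioi le_rfl) measurableSet_Ioi,
      Ioc_union_Ioi_eq_Ioi (mul_le_of_le_one_left hr.le hρ₁)]
  refine (ENNReal.add_le_add_iff_right hfin).1 ?_
  calc ν (Ioi r) + ν (Ioi r) = 2 * ν (Ioi r) := (two_mul _).symm
    _ ≤ 2 * (ENNReal.ofReal (1 / 2) * ν (Ioi (ρ * r))) := by
        gcongr
        exact (h r hr hrx₀ ρ hρ hρ₁).trans (by gcongr)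
    _ = ν (Ioc (ρ * r) r) + ν (Ioi r) := by
        rw [← mul_assoc, ← ofReal_ofNat, ← ofReal_mul zero_le_two, mul_one_div_cancel two_ne_zero,
          ofReal_one, one_mul, hunion]

lemma exists_truncatedMoment_le_scaledLaplaceMoment (h : TailScaling ν α C x₀)
    (hν : IntegrableOn (fun s => min 1 s) (Ioi 0) ν) (hα : 0 < α) (hx₀ : 0 ≤ x₀) (n : ℕ) :
    ∃ K, 0 < K ∧ ∀ x, x₀ < x →
      truncatedMoment ν n x ≤ ENNReal.ofReal K * scaledLaplaceMoment ν n x := by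
  obtain ⟨ρ, hρ, hρ₁, hCρ⟩ := exists_mul_rpow_le hα one_half_pos C
  refine ⟨exp 1 + exp 1 * (ρ ^ n)⁻¹, by positivity, fun x hx => ?_⟩
  have hx' : 0 < x := hx₀.trans_lt hx
  have htail : ν (Ioi (1 / x)) ≤ ν (Ioc (ρ / x) (1 / x)) := by
    rw [← mul_one_div ρ x]
    refine h.measure_Ioi_le_measure_Ioc (by positivity) ?_
      (measure_Ioi_ne_top hν (by positivity)) hρ hρ₁ hCρ
    rwa [one_div_mul_eq_div, div_lt_one hx']
  rw [ofReal_add (by positivity) (by positivity), add_mul]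
  refine (truncatedMoment_le_add_measure_Ioi hx').trans ?_
  gcongr
  exact htail.trans (measure_Ioc_le_scaledLaplaceMoment hρ hx')

lemma exists_pow_mul_laplaceMoment_le (h : TailScaling ν α C x₀)
    (hν : IntegrableOn (fun s => min 1 s) (Ioi 0) ν) (hα : 0 < α) (hC : 0 < C) (hx₀ : 0 ≤ x₀)
    (hn : n ≠ 0) :
    ∃ M, 0 < M ∧ ∀ lam, 1 ≤ lam → ∀ x, x₀ < x →
      x ^ n * laplaceMoment ν n x ≤
        M * lam⁻¹ ^ α * ((lam * x) ^ n * laplaceMoment ν n (lam * x)) := by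
  obtain ⟨K, hK, hle⟩ := h.exists_truncatedMoment_le_scaledLaplaceMoment hν hα hx₀ n
  refine ⟨n.factorial * C * K, by positivity, fun lam hlam x hx => ?_⟩
  have hx' : 0 < x := hx₀.trans_lt hx
  have hlamx : x₀ < lam * x := hx.trans_le (le_mul_of_one_le_left hx'.le hlam)
  have hpos : 0 ≤ laplaceMoment ν n (lam * x) := laplaceMoment_nonneg
  rw [← ofReal_le_ofReal_iff (by positivity),
    ofReal_mul (by positivity : 0 ≤ n.factorial * C * K * lam⁻¹ ^ α),
    ← scaledLaplaceMoment_eq_ofReal hν hn hx',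
    ← scaledLaplaceMoment_eq_ofReal hν hn (by positivity)]
  calc scaledLaplaceMoment ν n x
      ≤ ENNReal.ofReal n.factorial * truncatedMoment ν n x :=
        scaledLaplaceMoment_le_truncatedMoment hx'.le
    _ ≤ ENNReal.ofReal n.factorial * (ENNReal.ofReal (C * lam⁻¹ ^ α) *
          (ENNReal.ofReal K * scaledLaplaceMoment ν n (lam * x))) := by
        gcongr
        exact (h.truncatedMoment_le hn hx₀ hx hlam).trans (by gcongr; exact hle _ hlamx)
    _ = ENNReal.ofReal (n.factorial * C * K * lam⁻¹ ^ α) *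
          scaledLaplaceMoment ν n (lam * x) := by
        rw [← mul_assoc, ← mul_assoc, ← ofReal_mul (by positivity), ← ofReal_mul (by positivity)]
        congr 2
        ring

theorem exists_wlsc_laplaceMoment (h : TailScaling ν α C x₀)
    (hν : IntegrableOn (fun s => min 1 s) (Ioi 0) ν) (hα : 0 < α) (hC : 0 < C) (hx₀ : 0 ≤ x₀)
    (hn : n ≠ 0) :
    ∃ c, 0 < c ∧ c ≤ 1 ∧ WLSC (laplaceMoment ν n) (α - n) c x₀ := by
  obtain ⟨M, hM, hle⟩ := h.exists_pow_mul_laplaceMoment_le hν hα hC hx₀ hn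
  refine ⟨min 1 M⁻¹, by positivity, min_le_left _ _, fun lam hlam x hx => ?_⟩
  have hx' : 0 < x := hx₀.trans_lt hx
  have hlam' : 0 < lam := one_pos.trans_le hlam
  have hpos : 0 ≤ laplaceMoment ν n x := laplaceMoment_nonneg
  have hdiv : laplaceMoment ν n x ≤
      M * lam⁻¹ ^ α * (lam ^ n * laplaceMoment ν n (lam * x)) :=
    le_of_mul_le_mul_left ((hle lam hlam x hx).trans_eq (by ring)) (pow_pos hx' n)
  calc min 1 M⁻¹ * lam ^ (α - n) * laplaceMoment ν n x
      ≤ M⁻¹ * lam ^ (α - n) * (M * lam⁻¹ ^ α * (lam ^ n * laplaceMoment ν n (lam * x))) := by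
        gcongr
        exact min_le_right _ _
    _ = laplaceMoment ν n (lam * x) := by
        rw [rpow_sub hlam', Real.rpow_natCast, inv_rpow hlam'.le]
        field_simp

end TailScaling

theorem tail_scaling_implies_wlsc_second_deriv_general
    (φ : ℝ → ℝ) (a b : ℝ) (ν : Measure ℝ) (α C x₀ : ℝ) (n : ℕ) (hn : 2 ≤ n)
    (hνfin : ∫⁻ s in Ioi (0 : ℝ), ENNReal.ofReal (min 1 s) ∂ν ≠ ⊤)
    (hφ : ∀ lam : ℝ, 0 < lam →
      φ lam = a + b * lam + ∫ s in Ioi (0 : ℝ), (1 - exp (-lam * s)) ∂ν)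
    (hα : 0 < α) (hC : 0 < C) (hx₀ : 0 ≤ x₀) (htail : TailScaling ν α C x₀) :
    ∃ c : ℝ, 0 < c ∧ c ≤ 1 ∧
      WLSC (fun x => (-1) ^ (n + 1) * iteratedDeriv n φ x) (α - n) c x₀ := by
  obtain ⟨m, rfl⟩ := Nat.exists_eq_add_of_le' hn
  have hν := integrableOn_min_one hνfin
  obtain ⟨c, hc, hc₁, hscale⟩ :=
    htail.exists_wlsc_laplaceMoment hν hα hC hx₀ (m + 1).succ_ne_zero
  have hderiv : ∀ x, x₀ < x →
      (-1) ^ (m + 2 + 1) * iteratedDeriv (m + 2) φ x = laplaceMoment ν (m + 2) x := by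
    intro x hx
    rw [iteratedDeriv_succ,
      (hasDerivAt_iteratedDeriv_laplaceExponent hν hφ m (hx₀.trans_lt hx)).deriv, ← mul_assoc,
      ← pow_add, Even.neg_one_pow ⟨m + 2, by ring⟩, one_mul]
  refine ⟨c, hc, hc₁, fun lam hlam x hx => ?_⟩
  have hlamx : x₀ < lam * x := hx.trans_le (le_mul_of_one_le_left (hx₀.trans hx.le) hlam)
  simpa only [hderiv x hx, hderiv _ hlamx] using hscale lam hlam x hx

/-- If the tail of the Lévy measure satisfies
`ν((r,∞)) ≤ C λ^α ν((λr,∞))` for all `0 < r < 1/x₀` and `0 < λ ≤ 1`, then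
`−φ'' ∈ WLSC(α−2, c, x₀)` for some `c ∈ (0,1]`. -/
theorem tail_scaling_implies_wlsc_second_deriv
    (φ : ℝ → ℝ) (b : ℝ) (ν : Measure ℝ) (α C x₀ : ℝ)
    (hb : 0 ≤ b)
    (hνfin : ∫⁻ s in Ioi (0:ℝ), ENNReal.ofReal (min 1 s) ∂ν ≠ ⊤)
    (hφ : ∀ lam : ℝ, 0 ≤ lam →
      φ lam = b * lam + ∫ s in Ioi (0:ℝ), (1 - Real.exp (-lam * s)) ∂ν)
    (hα : 0 < α) (hC : 1 ≤ C) (hx₀ : 0 ≤ x₀)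
    (htail : ∀ r : ℝ, 0 < r → r * x₀ < 1 → ∀ lam : ℝ, 0 < lam → lam ≤ 1 →
      ν (Ioi r) ≤ ENNReal.ofReal (C * lam ^ α) * ν (Ioi (lam * r))) :
    ∃ c : ℝ, 0 < c ∧ c ≤ 1 ∧
      WLSC (fun x => -(deriv (deriv φ) x)) (α - 2) c x₀ := by
  simpa [iteratedDeriv_succ, pow_succ] using tail_scaling_implies_wlsc_second_deriv_general
    φ 0 b ν α C x₀ 2 le_rfl hνfin (fun lam hlam => by rw [zero_add, hφ lam hlam.le]) hα
    (one_pos.trans_le hC) hx₀ htail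
end
end

section
/- Let φ(λ) = bλ + ∫_{(0,∞)} (1 − e^{−λs}) ν(ds) be the Laplace exponent of a subordinator with Lévy measure ν, and suppose −φ'' ∈ WLSC(α−2, c, x₀) for some c ∈ (0,1], x₀ ≥ 0 and α > 0. Then there is C ≥ 1 such that for all 0 < r < 1/x₀ (all r > 0 if x₀ = 0): K(r) ≤ h(r) ≤ C·K(r), where K(r) = r^{−2} ∫_{(0,r)} s² ν(ds) and h(r) = ∫_{(0,∞)} min{1, s²/r²} ν(ds). -/
open MeasureTheory Real Set

noncomputable section

/-- The concentration function `K(r) = r^{−2} ∫_{(0,r)} s² ν(ds)`. -/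
def concK (ν : Measure ℝ) (r : ℝ) : ℝ := (1 / r ^ 2) * ∫ s in Ioo (0:ℝ) r, s ^ 2 ∂ν

/-- The concentration function `h(r) = ∫_{(0,∞)} min{1, s²/r²} ν(ds)`. -/
def concH (ν : Measure ℝ) (r : ℝ) : ℝ := ∫ s in Ioi (0:ℝ), min 1 (s ^ 2 / r ^ 2) ∂ν

/-!
Put `G(x) = -x² φ''(x) = ∫ (xs)² e^{-xs} ν(ds)` and
`ψ(x) = φ(x) - x φ'(x) = ∫ (1 - (1 + xs) e^{-xs}) ν(ds)`, smooth versions of `K(1/x)` and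
`h(1/x)`. The elementary inequality `min 1 u² ≤ 5 (1 - (1 + u) e^{-u})` gives `h(1/x) ≤ 5 ψ(x)`.
By assumption `G` has lower scaling of the positive order `α`, and `ψ'(x) = G(x) / x`, so
integrating from `x₀` to `y` yields `ψ(y) ≤ ψ(x₀) + G(y) / (cα)`. Scaling and continuity also give
`c G(x₀) ≤ G(y)`, which absorbs the constant `ψ(x₀)`. Finally `G(x)` is at most a multiple of
`K(1/x)`: for large `lam`, the part of `G(lam x)` coming from `s ≥ 1/x` is smaller than
`(c/2) G(x)`, whereas `G(lam x) ≥ c G(x)`.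
-/

namespace WLSC

variable {f g : ℝ → ℝ} {θ c x₀ x y : ℝ}

lemma congr (hf : WLSC f θ c x₀) (hx₀ : 0 ≤ x₀) (hfg : EqOn f g (Ioi x₀)) : WLSC g θ c x₀ := by
  intro lam hlam x hx
  have hlamx : x₀ < lam * x := hx.trans_le (le_mul_of_one_le_left (hx₀.trans hx.le) hlam)
  rw [← hfg hx, ← hfg hlamx]
  exact hf lam hlam x hx

lemma rpow_mul (hf : WLSC f θ c x₀) (hx₀ : 0 ≤ x₀) (β : ℝ) :
    WLSC (fun x => x ^ β * f x) (θ + β) c x₀ := by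
  intro lam hlam x hx
  have hlam₀ : 0 < lam := one_pos.trans_le hlam
  have hx_pos : 0 < x := hx₀.trans_lt hx
  calc c * lam ^ (θ + β) * (x ^ β * f x) = (lam * x) ^ β * (c * lam ^ θ * f x) := by
        rw [rpow_add hlam₀, mul_rpow hlam₀.le hx_pos.le]; ring
    _ ≤ (lam * x) ^ β * f (lam * x) := by gcongr; exact hf lam hlam x hx

lemma mul_div_rpow_le (hf : WLSC f θ c x₀) (hx₀ : 0 ≤ x₀) (hx : x₀ < x) (hxy : x ≤ y) :
    c * (y / x) ^ θ * f x ≤ f y := by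
  have hx_pos : 0 < x := hx₀.trans_lt hx
  simpa only [div_mul_cancel₀ y hx_pos.ne'] using hf (y / x) ((one_le_div hx_pos).2 hxy) x hx

lemma mul_le_of_le (hf : WLSC f θ c x₀) (hθ : 0 ≤ θ) (hc : 0 ≤ c) (hx₀ : 0 ≤ x₀)
    (hfx : 0 ≤ f x) (hx : x₀ < x) (hxy : x ≤ y) : c * f x ≤ f y := by
  have hone : 1 ≤ (y / x) ^ θ := one_le_rpow ((one_le_div (hx₀.trans_lt hx)).2 hxy) hθ
  calc c * f x ≤ c * (y / x) ^ θ * f x := by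
        gcongr; exact le_mul_of_one_le_right hc hone
    _ ≤ f y := hf.mul_div_rpow_le hx₀ hx hxy

lemma mul_left_endpoint_le (hf : WLSC f θ c x₀) (hθ : 0 ≤ θ) (hc : 0 ≤ c) (hx₀ : 0 ≤ x₀)
    (hnonneg : ∀ x, x₀ < x → 0 ≤ f x) (hcont : ContinuousWithinAt f (Ioi x₀) x₀) (hy : x₀ < y) :
    c * f x₀ ≤ f y := by
  refine le_of_tendsto (hcont.const_mul c) ?_
  filter_upwards [Ioc_mem_nhdsGT hy] with x hx
  exact hf.mul_le_of_le hθ hc hx₀ (hnonneg x hx.1) hx.1 hx.2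

/-- Integrating `F' = f / x ≤ c⁻¹ (x / y) ^ θ f(y) / x` over `(x₀, y)`. -/
lemma primitive_le (hf : WLSC f θ c x₀) (hθ : 0 < θ) (hc : 0 < c) (hx₀ : 0 ≤ x₀)
    {F : ℝ → ℝ} (hF : ContinuousOn F (Ici x₀))
    (hderiv : ∀ x, x₀ < x → HasDerivAt F (f x / x) x) (hy : x₀ < y) (hfy : 0 ≤ f y) :
    F y ≤ F x₀ + f y / (c * θ) := by
  have hy_pos : 0 < y := hx₀.trans_lt hy
  set B : ℝ → ℝ := fun x => f y / (c * θ * y ^ θ) * x ^ θ with hB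
  have hB_cont : Continuous B := continuous_const.mul (continuous_rpow_const hθ.le)
  have hB_deriv : ∀ x, 0 < x → HasDerivAt B (f y / (c * y ^ θ) * x ^ θ / x) x := fun x hx => by
    refine ((hasDerivAt_rpow_const (Or.inl hx.ne')).const_mul _).congr_deriv ?_
    rw [rpow_sub_one hx.ne']
    field_simp
  have hanti : AntitoneOn (fun x => F x - B x) (Icc x₀ y) := by
    refine antitoneOn_of_hasDerivWithinAt_nonpos (convex_Icc x₀ y)
      ((hF.mono Icc_subset_Ici_self).sub hB_cont.continuousOn)
      (f' := fun x => f x / x - f y / (c * y ^ θ) * x ^ θ / x) ?_ ?_ <;>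
      intro x hx <;> rw [interior_Icc] at hx
    · exact ((hderiv x hx.1).sub (hB_deriv x (hx₀.trans_lt hx.1))).hasDerivWithinAt
    · have hx_pos : 0 < x := hx₀.trans_lt hx.1
      have hscale := hf.mul_div_rpow_le hx₀ hx.1 hx.2.le
      rw [div_rpow hy_pos.le hx_pos.le] at hscale
      rw [sub_nonpos]
      gcongr
      rw [div_mul_eq_mul_div, le_div_iff₀ (by positivity)]
      calc f x * (c * y ^ θ) = c * (y ^ θ / x ^ θ) * f x * x ^ θ := by field_simp
        _ ≤ f y * x ^ θ := by gcongr
  have hle : F y - B y ≤ F x₀ - B x₀ :=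
    hanti (left_mem_Icc.2 hy.le) (right_mem_Icc.2 hy.le) hy.le
  have hBx₀ : 0 ≤ B x₀ := by positivity
  have hBy : B y = f y / (c * θ) := by
    simp only [hB]; field_simp
  linarith

end WLSC

/-- The class of kernels `k` for which `∫ k(xs) ν(ds)` converges at every `x ≥ 0`, for every Lévy
measure `ν` of a subordinator. The bound is required at `u = 0` too, which forces `k 0 = 0`. -/
structure IsLevyKernel (k : ℝ → ℝ) : Prop where
  measurable : Measurable k
  exists_bound : ∃ A, ∀ u, 0 ≤ u → |k u| ≤ A * min 1 u

/-- The integral `∫_{(0,∞)} k(xs) ν(ds)`. The Laplace exponent without drift, `x φ'(x)` and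
`x² φ''(x)` are of this form, and so are `K` and `h` as functions of `x = 1/r`. -/
def dilationIntegral (ν : Measure ℝ) (k : ℝ → ℝ) (x : ℝ) : ℝ := ∫ s in Ioi (0 : ℝ), k (x * s) ∂ν

lemma min_one_mul_le_max_mul_min {x s : ℝ} (hs : 0 ≤ s) :
    min 1 (x * s) ≤ max 1 x * min 1 s := by
  rw [mul_min_of_nonneg _ _ (zero_le_one.trans (le_max_left 1 x)), mul_one]
  gcongr <;> simp

namespace IsLevyKernel

variable {k l : ℝ → ℝ}

lemma exists_nonneg_bound (hk : IsLevyKernel k) :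
    ∃ A, 0 ≤ A ∧ ∀ u, 0 ≤ u → |k u| ≤ A * min 1 u := by
  obtain ⟨A, hA⟩ := hk.exists_bound
  exact ⟨A, by simpa using (abs_nonneg (k 1)).trans (hA 1 zero_le_one), hA⟩

lemma sub (hk : IsLevyKernel k) (hl : IsLevyKernel l) : IsLevyKernel (fun u => k u - l u) := by
  obtain ⟨A, hA⟩ := hk.exists_bound
  obtain ⟨B, hB⟩ := hl.exists_bound
  refine ⟨hk.measurable.sub hl.measurable, A + B, fun u hu => ?_⟩
  rw [add_mul]
  exact (abs_sub _ _).trans (add_le_add (hA u hu) (hB u hu))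

lemma const_mul (hk : IsLevyKernel k) (a : ℝ) : IsLevyKernel (fun u => a * k u) := by
  obtain ⟨A, hA⟩ := hk.exists_bound
  refine ⟨hk.measurable.const_mul a, |a| * A, fun u hu => ?_⟩
  rw [abs_mul, mul_assoc]
  gcongr
  exact hA u hu

lemma comp_mul_left (hk : IsLevyKernel k) {a : ℝ} (ha : 0 ≤ a) :
    IsLevyKernel (fun u => k (a * u)) := by
  obtain ⟨A, hA₀, hA⟩ := hk.exists_nonneg_bound
  refine ⟨hk.measurable.comp (measurable_const_mul a), A * max 1 a, fun u hu => ?_⟩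
  rw [mul_assoc]
  exact (hA _ (mul_nonneg ha hu)).trans
    (mul_le_mul_of_nonneg_left (min_one_mul_le_max_mul_min hu) hA₀)

lemma one_sub_exp_neg : IsLevyKernel (fun u => 1 - exp (-u)) := by
  refine ⟨by fun_prop, 1, fun u hu => ?_⟩
  have hexp_le : exp (-u) ≤ 1 := exp_le_one_iff.2 (neg_nonpos.2 hu)
  rw [abs_of_nonneg (sub_nonneg.2 hexp_le), one_mul]
  exact le_min (by linarith [exp_pos (-u)]) (by linarith [one_sub_le_exp_neg u])

lemma pow_succ_mul_exp_neg (n : ℕ) : IsLevyKernel (fun u => u ^ (n + 1) * exp (-u)) := by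
  have hbound : ∀ m : ℕ, ∀ u : ℝ, 0 ≤ u → u ^ m * exp (-u) ≤ m.factorial := fun m u hu => by
    rw [exp_neg, ← div_eq_mul_inv, div_le_iff₀ (exp_pos u), mul_comm, ← div_le_iff₀ (by positivity)]
    exact pow_div_factorial_le_exp u hu m
  refine ⟨by fun_prop, (n + 1).factorial, fun u hu => ?_⟩
  rw [abs_of_nonneg (by positivity), mul_min_of_nonneg _ _ (Nat.cast_nonneg _), mul_one]
  refine le_min (hbound (n + 1) u hu) ?_
  calc u ^ (n + 1) * exp (-u) = u ^ n * exp (-u) * u := by ring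
    _ ≤ (n + 1).factorial * u := by
      gcongr
      exact (hbound n u hu).trans (by exact_mod_cast Nat.factorial_le n.le_succ)

lemma mul_exp_neg : IsLevyKernel (fun u => u * exp (-u)) := by
  simpa using pow_succ_mul_exp_neg 0

lemma min_one_sq : IsLevyKernel (fun u => min 1 (u ^ 2)) := by
  refine ⟨by fun_prop, 1, fun u hu => ?_⟩
  rw [abs_of_nonneg (by positivity), one_mul]
  rcases le_total u 1 with h | h
  · exact min_le_min_left 1 (pow_le_of_le_one hu h two_ne_zero)
  · exact (min_le_left _ _).trans_eq (min_eq_left h).symm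

lemma of_nonneg_of_le (hl : IsLevyKernel l) (hk : Measurable k) (hnonneg : ∀ u, 0 ≤ u → 0 ≤ k u)
    (hle : ∀ u, 0 ≤ u → k u ≤ l u) : IsLevyKernel k := by
  obtain ⟨A, hA⟩ := hl.exists_bound
  refine ⟨hk, A, fun u hu => ?_⟩
  rw [abs_of_nonneg (hnonneg u hu)]
  exact (hle u hu).trans ((le_abs_self _).trans (hA u hu))

end IsLevyKernel

section DilationIntegral

variable {ν : Measure ℝ} {k l : ℝ → ℝ} {x : ℝ}

lemma IsLevyKernel.integrableOn (hk : IsLevyKernel k)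
    (hν : IntegrableOn (fun s => min 1 s) (Ioi 0) ν) (hx : 0 ≤ x) :
    IntegrableOn (fun s => k (x * s)) (Ioi 0) ν := by
  obtain ⟨A, hA⟩ := (hk.comp_mul_left hx).exists_bound
  refine (hν.const_mul A).mono'
    (hk.measurable.comp (measurable_const_mul x)).aestronglyMeasurable ?_
  filter_upwards [ae_restrict_mem measurableSet_Ioi] with s hs
  exact hA s (le_of_lt hs)

lemma dilationIntegral_sub (hν : IntegrableOn (fun s => min 1 s) (Ioi 0) ν)
    (hk : IsLevyKernel k) (hl : IsLevyKernel l) (hx : 0 ≤ x) :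
    dilationIntegral ν (fun u => k u - l u) x = dilationIntegral ν k x - dilationIntegral ν l x :=
  integral_sub (hk.integrableOn hν hx) (hl.integrableOn hν hx)

lemma dilationIntegral_const_mul (a : ℝ) :
    dilationIntegral ν (fun u => a * k u) x = a * dilationIntegral ν k x :=
  integral_const_mul a _

lemma dilationIntegral_comp_mul_left (a : ℝ) :
    dilationIntegral ν (fun u => k (a * u)) x = dilationIntegral ν k (a * x) := by
  simp only [dilationIntegral, mul_assoc]

lemma dilationIntegral_nonneg (hk : ∀ u, 0 ≤ u → 0 ≤ k u) (hx : 0 ≤ x) :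
    0 ≤ dilationIntegral ν k x :=
  setIntegral_nonneg measurableSet_Ioi fun _ hs => hk _ (mul_nonneg hx (le_of_lt hs))

lemma dilationIntegral_mono (hν : IntegrableOn (fun s => min 1 s) (Ioi 0) ν)
    (hk : IsLevyKernel k) (hl : IsLevyKernel l) (hkl : ∀ u, 0 ≤ u → k u ≤ l u) (hx : 0 ≤ x) :
    dilationIntegral ν k x ≤ dilationIntegral ν l x :=
  setIntegral_mono_on (hk.integrableOn hν hx) (hl.integrableOn hν hx) measurableSet_Ioi
    fun _ hs => hkl _ (mul_nonneg hx (le_of_lt hs))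

lemma dilationIntegral_eq_zero_of_kernel_zero (hν : IntegrableOn (fun s => min 1 s) (Ioi 0) ν)
    (hk : IsLevyKernel k) (hk_nonneg : ∀ u, 0 ≤ u → 0 ≤ k u)
    (hkl : ∀ u, 0 ≤ u → k u = 0 → l u = 0) (hx : 0 ≤ x) (hzero : dilationIntegral ν k x = 0) :
    dilationIntegral ν l x = 0 := by
  have hmem : ∀ᵐ s ∂ν.restrict (Ioi 0), 0 ≤ x * s := by
    filter_upwards [ae_restrict_mem measurableSet_Ioi] with s hs
    exact mul_nonneg hx (le_of_lt hs)
  have hae : (fun s => k (x * s)) =ᵐ[ν.restrict (Ioi 0)] 0 :=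
    (integral_eq_zero_iff_of_nonneg_ae (hmem.mono fun s hs => hk_nonneg _ hs)
      (hk.integrableOn hν hx)).1 hzero
  refine integral_eq_zero_of_ae ?_
  filter_upwards [hmem, hae] with s hs hks
  exact hkl _ hs hks

lemma continuousOn_dilationIntegral (hν : IntegrableOn (fun s => min 1 s) (Ioi 0) ν)
    (hk : IsLevyKernel k) (hcont : Continuous k) :
    ContinuousOn (dilationIntegral ν k) (Ici 0) := by
  intro x _
  obtain ⟨A, hA₀, hA⟩ := hk.exists_nonneg_bound
  refine continuousWithinAt_of_dominated (bound := fun s => A * (max 1 (x + 1) * min 1 s))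
    (Filter.Eventually.of_forall fun y => by fun_prop) ?_ ((hν.const_mul _).const_mul _)
    (Filter.Eventually.of_forall fun s => by fun_prop)
  filter_upwards [self_mem_nhdsWithin, mem_nhdsWithin_of_mem_nhds (Iio_mem_nhds (lt_add_one x))]
    with y hy hyx
  filter_upwards [ae_restrict_mem measurableSet_Ioi] with s hs
  have hs₀ : 0 ≤ s := le_of_lt hs
  calc ‖k (y * s)‖ ≤ A * min 1 (y * s) := hA _ (mul_nonneg hy hs₀)
    _ ≤ A * (max 1 y * min 1 s) := by gcongr; exact min_one_mul_le_max_mul_min hs₀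
    _ ≤ A * (max 1 (x + 1) * min 1 s) := by gcongr; exact le_of_lt hyx

lemma hasDerivAt_dilationIntegral {k' : ℝ → ℝ}
    (hν : IntegrableOn (fun s => min 1 s) (Ioi 0) ν) (hk : IsLevyKernel k)
    (hk' : IsLevyKernel (fun u => u * k' u)) (hderiv : ∀ u, 0 < u → HasDerivAt k (k' u) u)
    (hx : 0 < x) :
    HasDerivAt (dilationIntegral ν k) (dilationIntegral ν (fun u => u * k' u) x / x) x := by
  obtain ⟨A, hA₀, hA⟩ := hk'.exists_nonneg_bound
  rw [dilationIntegral, ← integral_div]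
  refine (hasDerivAt_integral_of_dominated_loc_of_deriv_le (Ioi_mem_nhds (half_lt_self hx))
    (F := fun y s => k (y * s)) (F' := fun y s => y * s * k' (y * s) / y)
    (bound := fun s => A * (max (x / 2)⁻¹ 1 * min 1 s))
    (Filter.Eventually.of_forall fun y =>
      (hk.measurable.comp (measurable_const_mul y)).aestronglyMeasurable)
    (hk.integrableOn hν hx.le) ((hk'.integrableOn hν hx.le).div_const x).aestronglyMeasurable ?_
    ((hν.const_mul _).const_mul _) ?_).2
  all_goals
    filter_upwards [ae_restrict_mem measurableSet_Ioi] with s (hs : 0 < s) y (hy : x / 2 < y)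
    have hy_pos : 0 < y := (half_pos hx).trans hy
  · calc ‖y * s * k' (y * s) / y‖ = |y * s * k' (y * s)| / y := by
          rw [norm_div, norm_eq_abs, norm_of_nonneg hy_pos.le]
      _ ≤ A * min 1 (y * s) / y := by gcongr; exact hA _ (by positivity)
      _ = A * min y⁻¹ s := by
          rw [mul_div_assoc, ← min_div_div_right hy_pos.le, one_div,
            mul_div_cancel_left₀ _ hy_pos.ne']
      _ ≤ A * min (max (x / 2)⁻¹ 1) (max (x / 2)⁻¹ 1 * s) := by
          gcongr
          · exact (inv_anti₀ (half_pos hx) hy.le).trans (le_max_left _ _)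
          · exact le_mul_of_one_le_left hs.le (le_max_right _ _)
      _ = A * (max (x / 2)⁻¹ 1 * min 1 s) := by
          rw [mul_min_of_nonneg (a := max (x / 2)⁻¹ 1) 1 s (by positivity), mul_one]
  · refine ((hderiv (y * s) (by positivity)).comp y (hasDerivAt_mul_const s)).congr_deriv ?_
    field_simp

end DilationIntegral

/-- The smooth version `∫ (xs)² e^{-xs} ν(ds)` of `K(1/x)`, equal to `-x² φ''(x)`. -/
def smoothK (ν : Measure ℝ) : ℝ → ℝ := dilationIntegral ν fun u => u ^ 2 * exp (-u)

/-- The smooth version `∫ (1 - e^{-xs} - xs e^{-xs}) ν(ds)` of `h(1/x)`, equal to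
`φ(x) - x φ'(x)`. -/
def smoothH (ν : Measure ℝ) : ℝ → ℝ := dilationIntegral ν fun u => 1 - exp (-u) - u * exp (-u)

section SmoothConcentration

variable {ν : Measure ℝ} {x : ℝ}

lemma hasDerivAt_exp_neg (u : ℝ) : HasDerivAt (fun u => exp (-u)) (-exp (-u)) u := by
  simpa using (hasDerivAt_neg u).exp

lemma hasDerivAt_mul_exp_neg (u : ℝ) :
    HasDerivAt (fun u => u * exp (-u)) (exp (-u) - u * exp (-u)) u := by
  simpa [← sub_eq_add_neg] using (hasDerivAt_id u).fun_mul (hasDerivAt_exp_neg u)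

lemma IsLevyKernel.one_sub_exp_neg_sub_mul_exp_neg :
    IsLevyKernel (fun u => 1 - exp (-u) - u * exp (-u)) :=
  one_sub_exp_neg.sub mul_exp_neg

lemma IsLevyKernel.sq_mul_exp_neg : IsLevyKernel (fun u => u ^ 2 * exp (-u)) :=
  pow_succ_mul_exp_neg 1

lemma smoothK_nonneg (hx : 0 ≤ x) : 0 ≤ smoothK ν x :=
  dilationIntegral_nonneg (fun _ _ => by positivity) hx

lemma continuousOn_smoothK (hν : IntegrableOn (fun s => min 1 s) (Ioi 0) ν) :
    ContinuousOn (smoothK ν) (Ici 0) :=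
  continuousOn_dilationIntegral hν .sq_mul_exp_neg (by fun_prop)

lemma continuousOn_smoothH (hν : IntegrableOn (fun s => min 1 s) (Ioi 0) ν) :
    ContinuousOn (smoothH ν) (Ici 0) :=
  continuousOn_dilationIntegral hν .one_sub_exp_neg_sub_mul_exp_neg (by fun_prop)

lemma hasDerivAt_smoothH (hν : IntegrableOn (fun s => min 1 s) (Ioi 0) ν) (hx : 0 < x) :
    HasDerivAt (smoothH ν) (smoothK ν x / x) x := by
  have hkernel : (fun u : ℝ => u ^ 2 * exp (-u)) = fun u => u * (u * exp (-u)) := by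
    ext u; ring
  rw [smoothK, hkernel]
  refine hasDerivAt_dilationIntegral hν .one_sub_exp_neg_sub_mul_exp_neg
    (hkernel ▸ .sq_mul_exp_neg) (fun u _ => ?_) hx
  exact (((hasDerivAt_exp_neg u).const_sub 1).fun_sub (hasDerivAt_mul_exp_neg u)).congr_deriv
    (by ring)

lemma smoothH_eq_zero_of_smoothK_eq_zero (hν : IntegrableOn (fun s => min 1 s) (Ioi 0) ν)
    (hx : 0 ≤ x) (hK : smoothK ν x = 0) : smoothH ν x = 0 := by
  refine dilationIntegral_eq_zero_of_kernel_zero hν .sq_mul_exp_neg (fun _ _ => by positivity)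
    (fun u _ hu => ?_) hx hK
  have hu₀ : u = 0 := by simpa using hu
  simp [hu₀]

/-- `x φ'(x)` and `x (x φ'(x))'` are dilation integrals, up to the drift. -/
lemma sq_mul_neg_deriv_deriv_eq_smoothK {φ : ℝ → ℝ} {b : ℝ}
    (hν : IntegrableOn (fun s => min 1 s) (Ioi 0) ν)
    (hφ : ∀ y, 0 < y → φ y = b * y + dilationIntegral ν (fun u => 1 - exp (-u)) y) (hx : 0 < x) :
    x ^ 2 * -(deriv (deriv φ) x) = smoothK ν x := by
  set D : ℝ → ℝ := dilationIntegral ν fun u => u * exp (-u)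
  have hD : HasDerivAt D ((D x - smoothK ν x) / x) x := by
    have hkernel : (fun u => u * exp (-u) - u ^ 2 * exp (-u))
        = fun u => u * (exp (-u) - u * exp (-u)) := by ext u; ring
    rw [smoothK, ← dilationIntegral_sub hν .mul_exp_neg .sq_mul_exp_neg hx.le, hkernel]
    exact hasDerivAt_dilationIntegral hν .mul_exp_neg
      (hkernel ▸ .sub .mul_exp_neg .sq_mul_exp_neg) (fun u _ => hasDerivAt_mul_exp_neg u) hx
  have hφ' : ∀ y, 0 < y → deriv φ y = b + D y / y := fun y hy => by
    have hI : HasDerivAt (dilationIntegral ν fun u => 1 - exp (-u)) (D y / y) y :=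
      hasDerivAt_dilationIntegral hν .one_sub_exp_neg .mul_exp_neg
        (fun u _ => by simpa using (hasDerivAt_exp_neg u).const_sub 1) hy
    refine (((hasDerivAt_const_mul b).add hI).congr_of_eventuallyEq ?_).deriv
    filter_upwards [Ioi_mem_nhds hy] with z hz using hφ z hz
  have hφ'' : HasDerivAt (deriv φ) (((D x - smoothK ν x) / x * x - D x * 1) / x ^ 2) x := by
    refine ((hD.div (hasDerivAt_id x) hx.ne').const_add b).congr_of_eventuallyEq ?_
    filter_upwards [Ioi_mem_nhds hx] with z hz using hφ' z hz
  rw [hφ''.deriv]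
  field_simp
  ring

end SmoothConcentration

section Comparison

variable {ν : Measure ℝ} {r : ℝ}

lemma min_one_sq_le_five_mul {u : ℝ} (hu : 0 ≤ u) :
    min 1 (u ^ 2) ≤ 5 * (1 - exp (-u) - u * exp (-u)) := by
  set D := 1 + u + u ^ 2 / 2 with hD
  have hD_pos : 0 < D := by positivity
  have hexp : exp (-u) ≤ 1 / D := by
    rw [exp_neg, ← one_div]
    exact one_div_le_one_div_of_le hD_pos (quadratic_le_exp_of_nonneg hu)
  have hmin : min 1 (u ^ 2) * D ≤ 5 * (u ^ 2 / 2) := by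
    rcases le_total u 1 with h | h
    · have hD_le : D ≤ 5 / 2 := by nlinarith
      rw [min_eq_right (pow_le_one₀ hu h)]
      linarith [mul_le_mul_of_nonneg_left hD_le (sq_nonneg u)]
    · rw [min_eq_left (one_le_pow₀ h)]
      nlinarith
  calc min 1 (u ^ 2) ≤ 5 * (u ^ 2 / 2) / D := (le_div_iff₀ hD_pos).2 hmin
    _ = 5 * (1 - (1 + u) * (1 / D)) := by field_simp; rw [hD]; ring
    _ ≤ 5 * (1 - (1 + u) * exp (-u)) := by gcongr
    _ = 5 * (1 - exp (-u) - u * exp (-u)) := by ring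

lemma indicator_sq_le_min_one_sq {u : ℝ} (hu : 0 ≤ u) :
    (Iio 1).indicator (fun u : ℝ => u ^ 2) u ≤ min 1 (u ^ 2) :=
  indicator_le' (fun _ h => le_min (pow_le_one₀ hu (le_of_lt h)) le_rfl)
    (fun _ _ => by positivity) u

lemma indicator_sq_nonneg (u : ℝ) : 0 ≤ (Iio 1).indicator (fun u : ℝ => u ^ 2) u :=
  indicator_nonneg (fun _ _ => sq_nonneg _) u

lemma IsLevyKernel.indicator_sq : IsLevyKernel ((Iio 1).indicator fun u : ℝ => u ^ 2) :=
  min_one_sq.of_nonneg_of_le (Measurable.indicator (by fun_prop) measurableSet_Iio)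
    (fun u _ => indicator_sq_nonneg u) fun _ => indicator_sq_le_min_one_sq

lemma concH_eq_dilationIntegral (r : ℝ) :
    concH ν r = dilationIntegral ν (fun u => min 1 (u ^ 2)) r⁻¹ := by
  simp only [concH, dilationIntegral, inv_mul_eq_div, div_pow]

lemma concK_eq_dilationIntegral (hr : 0 < r) :
    concK ν r = dilationIntegral ν ((Iio 1).indicator fun u => u ^ 2) r⁻¹ := by
  have hkernel : ∀ s : ℝ, (Iio 1).indicator (fun u : ℝ => u ^ 2) (r⁻¹ * s)
      = 1 / r ^ 2 * (Iio r).indicator (fun s => s ^ 2) s := fun s => by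
    simp only [indicator_apply, mem_Iio, inv_mul_lt_one₀ hr, mul_ite, mul_zero, mul_pow, inv_pow,
      one_div]
  simp only [concK, dilationIntegral, hkernel, integral_const_mul,
    setIntegral_indicator measurableSet_Iio, Ioi_inter_Iio]

lemma concK_nonneg (ν : Measure ℝ) (r : ℝ) : 0 ≤ concK ν r :=
  mul_nonneg (by positivity) (integral_nonneg fun _ => sq_nonneg _)

lemma concK_le_concH (hν : IntegrableOn (fun s => min 1 s) (Ioi 0) ν) (hr : 0 < r) :
    concK ν r ≤ concH ν r := by
  rw [concK_eq_dilationIntegral hr, concH_eq_dilationIntegral]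
  exact dilationIntegral_mono hν .indicator_sq .min_one_sq (fun _ => indicator_sq_le_min_one_sq)
    (inv_nonneg.2 hr.le)

lemma concH_le_five_mul_smoothH (hν : IntegrableOn (fun s => min 1 s) (Ioi 0) ν) (hr : 0 < r) :
    concH ν r ≤ 5 * smoothH ν r⁻¹ := by
  rw [concH_eq_dilationIntegral, smoothH, ← dilationIntegral_const_mul]
  exact dilationIntegral_mono hν .min_one_sq (.const_mul .one_sub_exp_neg_sub_mul_exp_neg 5)
    (fun _ => min_one_sq_le_five_mul) (inv_nonneg.2 hr.le)

lemma dilated_sq_mul_exp_neg_sub_le {lam u : ℝ} (hlam : 1 ≤ lam) (hu : 0 ≤ u) :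
    (lam * u) ^ 2 * exp (-(lam * u)) - lam ^ 2 * exp (1 - lam) * (u ^ 2 * exp (-u))
      ≤ lam ^ 2 * (Iio 1).indicator (fun u : ℝ => u ^ 2) u := by
  rcases lt_or_ge u 1 with h | h
  · rw [indicator_of_mem (mem_Iio.2 h)]
    have hexp_le : exp (-(lam * u)) ≤ 1 := exp_le_one_iff.2 (by nlinarith)
    calc (lam * u) ^ 2 * exp (-(lam * u)) - lam ^ 2 * exp (1 - lam) * (u ^ 2 * exp (-u))
        ≤ (lam * u) ^ 2 * exp (-(lam * u)) := sub_le_self _ (by positivity)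
      _ ≤ (lam * u) ^ 2 := mul_le_of_le_one_right (sq_nonneg _) hexp_le
      _ = lam ^ 2 * u ^ 2 := mul_pow _ _ _
  · rw [indicator_of_notMem (notMem_Iio.2 h), mul_zero, sub_nonpos]
    calc (lam * u) ^ 2 * exp (-(lam * u)) ≤ (lam * u) ^ 2 * exp (1 - lam + -u) := by
          gcongr; nlinarith
      _ = lam ^ 2 * exp (1 - lam) * (u ^ 2 * exp (-u)) := by rw [exp_add]; ring

lemma smoothK_mul_le (hν : IntegrableOn (fun s => min 1 s) (Ioi 0) ν) (hr : 0 < r) {lam : ℝ}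
    (hlam : 1 ≤ lam) :
    smoothK ν (lam * r⁻¹) ≤ lam ^ 2 * concK ν r + lam ^ 2 * exp (1 - lam) * smoothK ν r⁻¹ := by
  have hr' : 0 ≤ r⁻¹ := inv_nonneg.2 hr.le
  have hdil := IsLevyKernel.sq_mul_exp_neg.comp_mul_left (zero_le_one.trans hlam)
  have hscaled := IsLevyKernel.sq_mul_exp_neg.const_mul (lam ^ 2 * exp (1 - lam))
  have hmono := dilationIntegral_mono hν (hdil.sub hscaled)
    (IsLevyKernel.indicator_sq.const_mul (lam ^ 2))
    (fun _ => dilated_sq_mul_exp_neg_sub_le hlam) hr'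
  rw [dilationIntegral_sub hν hdil hscaled hr', dilationIntegral_const_mul,
    dilationIntegral_const_mul, ← concK_eq_dilationIntegral hr,
    dilationIntegral_comp_mul_left (k := fun u => u ^ 2 * exp (-u))] at hmono
  exact sub_le_iff_le_add.1 hmono

variable {α c x₀ : ℝ}

lemma exists_smoothK_le_mul_concK (hν : IntegrableOn (fun s => min 1 s) (Ioi 0) ν) (hα : 0 ≤ α)
    (hc : 0 < c) (hx₀ : 0 ≤ x₀) (hscal : WLSC (smoothK ν) α c x₀) :
    ∃ B, ∀ r, 0 < r → x₀ < r⁻¹ → smoothK ν r⁻¹ ≤ B * concK ν r := by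
  obtain ⟨lam, hsmall, hlam⟩ : ∃ lam : ℝ, lam ^ 2 * exp (1 - lam) < c / 2 ∧ 1 ≤ lam := by
    have htendsto : Filter.Tendsto (fun lam : ℝ => lam ^ 2 * exp (1 - lam)) .atTop (nhds 0) := by
      have h := (tendsto_pow_mul_exp_neg_atTop_nhds_zero 2).const_mul (exp 1)
      simp only [mul_zero] at h
      refine h.congr fun lam => ?_
      rw [sub_eq_add_neg, exp_add]; ring
    exact ((htendsto.eventually_lt_const (half_pos hc)).and
      (Filter.eventually_ge_atTop 1)).exists
  refine ⟨2 * lam ^ 2 / c, fun r hr hxr => ?_⟩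
  have hr' : 0 ≤ r⁻¹ := inv_nonneg.2 hr.le
  have hlower : c * smoothK ν r⁻¹ ≤ smoothK ν (lam * r⁻¹) :=
    hscal.mul_le_of_le hα hc.le hx₀ (smoothK_nonneg hr') hxr (le_mul_of_one_le_left hr' hlam)
  have hupper := smoothK_mul_le hν hr hlam
  have habsorb : lam ^ 2 * exp (1 - lam) * smoothK ν r⁻¹ ≤ c / 2 * smoothK ν r⁻¹ := by
    gcongr; exact smoothK_nonneg hr'
  rw [div_mul_eq_mul_div, le_div_iff₀ hc]
  linarith

lemma exists_smoothH_le_mul_smoothK (hν : IntegrableOn (fun s => min 1 s) (Ioi 0) ν) (hα : 0 < α)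
    (hc : 0 < c) (hx₀ : 0 ≤ x₀) (hscal : WLSC (smoothK ν) α c x₀) :
    ∃ A, ∀ y, x₀ < y → smoothH ν y ≤ A * smoothK ν y := by
  have hnonneg : ∀ x, x₀ ≤ x → 0 ≤ smoothK ν x := fun x hx => smoothK_nonneg (hx₀.trans hx)
  have hH_nonneg : 0 ≤ smoothH ν x₀ := dilationIntegral_nonneg
    (fun u hu => by linarith [min_one_sq_le_five_mul hu, le_min zero_le_one (sq_nonneg u)]) hx₀
  set A := smoothH ν x₀ / smoothK ν x₀
  have hA : smoothH ν x₀ = A * smoothK ν x₀ :=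
    (div_mul_cancel_of_imp (smoothH_eq_zero_of_smoothK_eq_zero hν hx₀)).symm
  have hA_nonneg : 0 ≤ A := div_nonneg hH_nonneg (hnonneg x₀ le_rfl)
  refine ⟨A / c + 1 / (c * α), fun y hy => ?_⟩
  have hendpoint : c * smoothK ν x₀ ≤ smoothK ν y :=
    hscal.mul_left_endpoint_le hα.le hc.le hx₀ (fun x hx => hnonneg x hx.le)
      ((continuousOn_smoothK hν x₀ hx₀).mono (Ioi_subset_Ici hx₀)) hy
  calc smoothH ν y ≤ smoothH ν x₀ + smoothK ν y / (c * α) :=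
        hscal.primitive_le hα hc hx₀ ((continuousOn_smoothH hν).mono (Ici_subset_Ici.2 hx₀))
          (fun x hx => hasDerivAt_smoothH hν (hx₀.trans_lt hx)) hy (hnonneg y hy.le)
    _ = A / c * (c * smoothK ν x₀) + 1 / (c * α) * smoothK ν y := by rw [hA]; field_simp
    _ ≤ A / c * smoothK ν y + 1 / (c * α) * smoothK ν y := by gcongr
    _ = (A / c + 1 / (c * α)) * smoothK ν y := by ring

lemma exists_concH_le_mul_concK (hν : IntegrableOn (fun s => min 1 s) (Ioi 0) ν) (hα : 0 < α)
    (hc : 0 < c) (hx₀ : 0 ≤ x₀) (hscal : WLSC (smoothK ν) α c x₀) :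
    ∃ C, 1 ≤ C ∧ ∀ r, 0 < r → x₀ < r⁻¹ → concH ν r ≤ C * concK ν r := by
  obtain ⟨A, hA⟩ := exists_smoothH_le_mul_smoothK hν hα hc hx₀ hscal
  obtain ⟨B, hB⟩ := exists_smoothK_le_mul_concK hν hα.le hc hx₀ hscal
  refine ⟨max 1 (5 * (max A 0 * B)), le_max_left _ _, fun r hr hxr => ?_⟩
  have hG : 0 ≤ smoothK ν r⁻¹ := smoothK_nonneg (inv_nonneg.2 hr.le)
  calc concH ν r ≤ 5 * smoothH ν r⁻¹ := concH_le_five_mul_smoothH hν hr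
    _ ≤ 5 * (A * smoothK ν r⁻¹) := by gcongr; exact hA _ hxr
    _ ≤ 5 * (max A 0 * smoothK ν r⁻¹) := by gcongr; exact le_max_left A 0
    _ ≤ 5 * (max A 0 * (B * concK ν r)) := by gcongr; exact hB r hr hxr
    _ = 5 * (max A 0 * B) * concK ν r := by ring
    _ ≤ max 1 (5 * (max A 0 * B)) * concK ν r := by
        gcongr
        · exact concK_nonneg ν r
        · exact le_max_right _ _

end Comparison

lemma integrableOn_min_one_of_lintegral_ne_top {ν : Measure ℝ}
    (hν : ∫⁻ s in Ioi (0 : ℝ), ENNReal.ofReal (min 1 s) ∂ν ≠ ⊤) :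
    IntegrableOn (fun s => min 1 s) (Ioi 0) ν := by
  refine ⟨by fun_prop, (hasFiniteIntegral_iff_ofReal ?_).2 hν.lt_top⟩
  filter_upwards [ae_restrict_mem measurableSet_Ioi] with s hs
  exact le_min zero_le_one (le_of_lt hs)

/-- If `−φ'' ∈ WLSC(α−2, c, x₀)` then `K(r) ≤ h(r) ≤ C·K(r)`
for all `0 < r < 1/x₀` (all `r > 0` if `x₀ = 0`). -/
theorem concentration_functions_comparable
    (φ : ℝ → ℝ) (b : ℝ) (ν : Measure ℝ) (α c x₀ : ℝ)
    (hb : 0 ≤ b)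
    (hνfin : ∫⁻ s in Ioi (0:ℝ), ENNReal.ofReal (min 1 s) ∂ν ≠ ⊤)
    (hφ : ∀ lam : ℝ, 0 ≤ lam →
      φ lam = b * lam + ∫ s in Ioi (0:ℝ), (1 - Real.exp (-lam * s)) ∂ν)
    (hα : 0 < α) (hc : 0 < c) (hc1 : c ≤ 1) (hx₀ : 0 ≤ x₀)
    (hscal : WLSC (fun x => -(deriv (deriv φ) x)) (α - 2) c x₀) :
    ∃ C : ℝ, 1 ≤ C ∧
      ∀ r : ℝ, 0 < r → r * x₀ < 1 →
        concK ν r ≤ concH ν r ∧ concH ν r ≤ C * concK ν r := by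
  have hν := integrableOn_min_one_of_lintegral_ne_top hνfin
  have hsmoothK : EqOn (fun x => x ^ (2:ℝ) * -(deriv (deriv φ) x)) (smoothK ν) (Ioi x₀) :=
    fun x hx => by
      simp only [rpow_two]
      refine sq_mul_neg_deriv_deriv_eq_smoothK (b := b) hν (fun y hy => ?_) (hx₀.trans_lt hx)
      simpa only [dilationIntegral, neg_mul] using hφ y hy.le
  have hscalK : WLSC (smoothK ν) α c x₀ := by
    simpa only [sub_add_cancel] using (hscal.rpow_mul hx₀ 2).congr hx₀ hsmoothK
  obtain ⟨C, hC, hle⟩ := exists_concH_le_mul_concK hν hα hc hx₀ hscalK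
  refine ⟨C, hC, fun r hr hrx => ⟨concK_le_concH hν hr, hle r hr ?_⟩⟩
  rwa [← one_div, lt_div_iff₀' hr]
end
end
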